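/- Let X be a 2×2 octonionic Hermitian matrix, viewed as the matrix [[α, q], [conj(q), β]] with α, β ∈ ℝ, q ∈ 𝕆, let A be a traceless 2×2 matrix with octonionic entries, and let ξ ∈ 𝕆². Then Re(ξ*·((X·A)·ξ)) = Re(ξ*·(X·(A·ξ))), where for a 2×2 octonionic matrix M one sets Re(ξ*Mξ) := Σ_{i,j} Re(conj(ξ_i)·(M_{ij}·ξ_j)) and on the right-hand side Re(ξ*·(X·η)) := Σ_{i,j} Re(conj(ξ_i)·(X_{ij}·η_j)) with η = A·ξ. (Identity (22) proved in Proposition 6.13.) -/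

import Mathlib

noncomputable section

open scoped Quaternion

/-- The octonions, realized as pairs of quaternions (Cayley–Dickson). -/
abbrev Oct : Type := ℍ[ℝ] × ℍ[ℝ]

/-- Octonionic multiplication: (x,y)·(w,z) = (xw − z̄y, zx + yw̄). -/
def omul (a b : Oct) : Oct :=
  (a.1 * b.1 - star b.2 * a.2, b.2 * a.1 + a.2 * star b.1)

/-- Octonionic conjugation. -/
def oconj (a : Oct) : Oct := (star a.1, -a.2)

/-- Real part of an octonion. -/
def oRe (a : Oct) : ℝ := a.1.re

/-- Squared norm |q|² = Re(q·q̄). -/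
def onSq (a : Oct) : ℝ := oRe (omul a (oconj a))

/-- Octonionic Hermitian 2×2 matrix: (α, β, q) represents [[α, q],[q̄, β]]. -/
abbrev Herm : Type := ℝ × ℝ × Oct

/-- Determinant of an octonionic Hermitian 2×2 matrix. -/
def detH (A : Herm) : ℝ := A.1 * A.2.1 - onSq A.2.2

/-- The quadratic form ξ ↦ Re(ξ*Aξ). -/
def qform (A : Herm) (ξ : Oct × Oct) : ℝ :=
  A.1 * onSq ξ.1 + A.2.1 * onSq ξ.2 + 2 * oRe (omul (oconj ξ.1) (omul A.2.2 ξ.2))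

/-- Positive definiteness. -/
def PosDefH (A : Herm) : Prop := ∀ ξ : Oct × Oct, ξ ≠ 0 → 0 < qform A ξ

/-- Nonnegative definiteness. -/
def NonnegDefH (A : Herm) : Prop := ∀ ξ : Oct × Oct, 0 ≤ qform A ξ

/-- 2×2 matrices with octonionic entries. -/
abbrev Omat : Type := Fin 2 → Fin 2 → Oct

/-- Action of a 2×2 octonionic matrix on a column vector. -/
def matVec (A : Omat) (ξ : Fin 2 → Oct) : Fin 2 → Oct :=
  fun i => ∑ j, omul (A i j) (ξ j)

/-- Product of 2×2 octonionic matrices. -/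
def matMul (X Y : Omat) : Omat := fun i j => ∑ k, omul (X i k) (Y k j)

/-- Embedding of ℝ into the octonions. -/
def oR (r : ℝ) : Oct := ((r : ℍ[ℝ]), 0)

/-- The 2×2 octonionic matrix [[α, q],[q̄, β]] attached to a Hermitian triple. -/
def hermToMat (A : Herm) : Omat := ![![oR A.1, A.2.2], ![oconj A.2.2, oR A.2.1]]

/-- The sesquilinear expression Σ_{i,j} Re(conj(ξᵢ)·(Xᵢⱼ·ηⱼ)). -/
def sesq (X : Omat) (ξ η : Fin 2 → Oct) : ℝ :=
  ∑ i, ∑ j, oRe (omul (oconj (ξ i)) (omul (X i j) (η j)))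

/-!
Let `[a, b, c] = (ab)c - a(bc)` and `⟨x, y⟩ = Re(x̄y)`. The two sides of the identity differ by
`∑ ⟨ξᵢ, [Xᵢₖ, Aₖⱼ, ξⱼ]⟩`. The real diagonal of `X` contributes nothing, and the terms with `i = j`
vanish because `x(x̄a) = |x|²a` and `Re` is an associative trace, which give `⟨x, [a, b, x]⟩ = 0`.
Polarizing, `⟨x, [a, b, y]⟩` is antisymmetric in `x` and `y`; as `q + q̄` is real, replacing `q` by
`q̄` costs another sign, so the two remaining terms add up to `⟨ξ₀, [q, tr A, ξ₁]⟩`.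
-/

lemma omul_add (a b c : Oct) : omul a (b + c) = omul a b + omul a c := by
  ext1 <;> simp only [omul, Prod.fst_add, Prod.snd_add, star_add] <;> noncomm_ring

lemma add_omul (a b c : Oct) : omul (a + b) c = omul a c + omul b c := by
  ext1 <;> simp only [omul, Prod.fst_add, Prod.snd_add] <;> noncomm_ring

lemma smul_omul (r : ℝ) (a b : Oct) : omul (r • a) b = r • omul a b := by
  ext1 <;> simp [omul, smul_sub]

lemma omul_sub (a b c : Oct) : omul a (b - c) = omul a b - omul a c := by
  rw [eq_sub_iff_add_eq, ← omul_add, sub_add_cancel]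

lemma oR_omul (r : ℝ) (a : Oct) : omul (oR r) a = r • a := by
  ext1 <;> simp [omul, oR, Quaternion.coe_mul_eq_smul, Quaternion.mul_coe_eq_smul]

open Quaternion in
lemma onSq_eq_normSq_add_normSq (x : Oct) : onSq x = normSq x.1 + normSq x.2 := by
  simp only [onSq, oRe, omul, oconj, star_neg, neg_mul, sub_neg_eq_add, re_add, self_mul_star,
    star_mul_self, re_coe]

open Quaternion in
lemma omul_oconj_omul (x a : Oct) : omul x (omul (oconj x) a) = onSq x • a := by
  obtain ⟨p, r⟩ := x
  obtain ⟨c, d⟩ := a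
  have fst_eq : p * (star p * c - star d * -r) - star (d * star p + -r * star c) * r =
      p * star p * c + c * (star r * r) := by
    simp only [star_add, star_mul, star_star, star_neg]
    noncomm_ring
  have snd_eq : (d * star p + -r * star c) * p + r * star (star p * c - star d * -r) =
      d * (star p * p) + r * star r * d := by
    simp only [star_sub, star_mul, star_star, star_neg]
    noncomm_ring
  rw [onSq_eq_normSq_add_normSq, add_smul]
  ext1
  · refine fst_eq.trans ?_
    rw [self_mul_star, star_mul_self, coe_mul_eq_smul, mul_coe_eq_smul]
    rfl
  · refine snd_eq.trans ?_
    rw [self_mul_star, star_mul_self, coe_mul_eq_smul, mul_coe_eq_smul]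
    rfl

lemma oRe_add (a b : Oct) : oRe (a + b) = oRe a + oRe b := rfl

lemma oRe_sub (a b : Oct) : oRe (a - b) = oRe a - oRe b := rfl

lemma oRe_smul (r : ℝ) (a : Oct) : oRe (r • a) = r * oRe a := rfl

lemma quaternion_re_mul_comm {R : Type*} [CommRing R] (p q : ℍ[R]) :
    (p * q).re = (q * p).re := by
  rw [Quaternion.re_mul, Quaternion.re_mul]
  ring

lemma oRe_omul_comm (a b : Oct) : oRe (omul a b) = oRe (omul b a) := by
  have re_star_mul : (star b.2 * a.2).re = (star a.2 * b.2).re := by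
    rw [← Quaternion.re_star, star_mul, star_star]
  rw [oRe, oRe, omul, omul, Quaternion.re_sub, Quaternion.re_sub, re_star_mul,
    quaternion_re_mul_comm a.1]

lemma oRe_omul_assoc (a b c : Oct) : oRe (omul (omul a b) c) = oRe (omul a (omul b c)) := by
  have cycle_a₁ := quaternion_re_mul_comm (star c.2 * b.2) a.1
  have cycle_b₁ := quaternion_re_mul_comm (star c.2 * a.2) (star b.1)
  have cycle_c₁ := quaternion_re_mul_comm (star b.2 * a.2) c.1
  simp only [oRe, omul, star_add, star_mul, star_star, sub_mul, add_mul, mul_sub, mul_add,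
    Quaternion.re_sub, Quaternion.re_add, mul_assoc] at cycle_a₁ cycle_b₁ cycle_c₁ ⊢
  linarith

lemma oconj_add (a b : Oct) : oconj (a + b) = oconj a + oconj b := by
  ext1 <;> simp [oconj, add_comm]

lemma add_oconj_self (a : Oct) : a + oconj a = oR (2 * oRe a) := by
  ext <;> simp [oconj, oR, oRe, two_mul]

/-- The Euclidean inner product `Re(x̄y)` of `𝕆 ≅ ℝ⁸`. -/
def oinner (x y : Oct) : ℝ := oRe (omul (oconj x) y)

lemma oinner_add_left (x y z : Oct) : oinner (x + y) z = oinner x z + oinner y z := by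
  rw [oinner, oconj_add, add_omul, oRe_add, oinner, oinner]

lemma oinner_add_right (x y z : Oct) : oinner x (y + z) = oinner x y + oinner x z := by
  rw [oinner, omul_add, oRe_add, oinner, oinner]

lemma oinner_sub_right (x y z : Oct) : oinner x (y - z) = oinner x y - oinner x z := by
  rw [oinner, omul_sub, oRe_sub, oinner, oinner]

lemma oinner_zero_right (x : Oct) : oinner x 0 = 0 := by
  rw [← sub_self x, oinner_sub_right, sub_self]

lemma oinner_omul_self (x a : Oct) : oinner x (omul a x) = onSq x * oRe a :=
  calc oRe (omul (oconj x) (omul a x))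
    _ = oRe (omul (omul (oconj x) a) x) := (oRe_omul_assoc _ _ _).symm
    _ = oRe (omul x (omul (oconj x) a)) := oRe_omul_comm _ _
    _ = onSq x * oRe a := by rw [omul_oconj_omul, oRe_smul]

lemma oinner_omul_omul_self (x a b : Oct) :
    oinner x (omul a (omul b x)) = onSq x * oRe (omul a b) :=
  calc oRe (omul (oconj x) (omul a (omul b x)))
    _ = oRe (omul (omul (omul (oconj x) a) b) x) := by rw [oRe_omul_assoc, oRe_omul_assoc]
    _ = oRe (omul x (omul (omul (oconj x) a) b)) := oRe_omul_comm _ _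
    _ = oRe (omul (omul x (omul (oconj x) a)) b) := (oRe_omul_assoc _ _ _).symm
    _ = onSq x * oRe (omul a b) := by rw [omul_oconj_omul, smul_omul, oRe_smul]

/-- The octonionic associator `(ab)c - a(bc)`. Mathlib's `associator` does not apply: the ring
structure that `Oct` carries as a product of types is the componentwise one, not `omul`. -/
def oassoc (a b c : Oct) : Oct := omul (omul a b) c - omul a (omul b c)

lemma oassoc_add_left (a a' b c : Oct) : oassoc (a + a') b c = oassoc a b c + oassoc a' b c := by
  simp only [oassoc, add_omul]
  abel

lemma oassoc_add_middle (a b b' c : Oct) :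
    oassoc a (b + b') c = oassoc a b c + oassoc a b' c := by
  simp only [oassoc, add_omul, omul_add]
  abel

lemma oassoc_add_right (a b c c' : Oct) : oassoc a b (c + c') = oassoc a b c + oassoc a b c' := by
  simp only [oassoc, omul_add]
  abel

lemma oassoc_zero_middle (a c : Oct) : oassoc a 0 c = 0 := by
  simpa using oassoc_add_middle a 0 0 c

lemma oassoc_oR_left (r : ℝ) (b c : Oct) : oassoc (oR r) b c = 0 := by
  simp only [oassoc, oR_omul, smul_omul, sub_self]

lemma oassoc_oconj_left (a b c : Oct) : oassoc (oconj a) b c = -oassoc a b c := by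
  rw [eq_neg_iff_add_eq_zero, add_comm, ← oassoc_add_left, add_oconj_self, oassoc_oR_left]

lemma oinner_oassoc_self (x a b : Oct) : oinner x (oassoc a b x) = 0 := by
  rw [oassoc, oinner_sub_right, oinner_omul_self, oinner_omul_omul_self, sub_self]

lemma oinner_oassoc_add_swap (x y a b : Oct) :
    oinner x (oassoc a b y) + oinner y (oassoc a b x) = 0 := by
  have polarized := oinner_oassoc_self (x + y) a b
  simpa only [oassoc_add_right, oinner_add_left, oinner_add_right, oinner_oassoc_self, zero_add,
    add_zero, add_comm] using polarized

lemma oinner_oassoc_oconj_swap (x y a b : Oct) :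
    oinner y (oassoc (oconj a) b x) = oinner x (oassoc a b y) := by
  have conj_sign : oinner y (oassoc (oconj a) b x) + oinner y (oassoc a b x) = 0 := by
    rw [← oinner_add_right, oassoc_oconj_left, neg_add_cancel, oinner_zero_right]
  linarith [oinner_oassoc_add_swap x y a b]

lemma sesq_eq_sum_oinner (X : Omat) (ξ η : Fin 2 → Oct) :
    sesq X ξ η = ∑ i, ∑ j, oinner (ξ i) (omul (X i j) (η j)) := rfl

lemma sesq_matMul_sub_sesq_matVec (X A : Omat) (ξ η : Fin 2 → Oct) :
    sesq (matMul X A) ξ η - sesq X ξ (matVec A η) =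
      ∑ i, ∑ j, ∑ k, oinner (ξ i) (oassoc (X i k) (A k j) (η j)) := by
  simp only [sesq_eq_sum_oinner, matMul, matVec, oassoc, Fin.sum_univ_two, add_omul, omul_add,
    oinner_add_right, oinner_sub_right]
  ring

theorem reQuad_matMul_general (X : Herm) (A : Omat) (ξ : Fin 2 → Oct) :
    sesq (matMul (hermToMat X) A) ξ ξ - sesq (hermToMat X) ξ (matVec A ξ) =
      oinner (ξ 0) (oassoc X.2.2 (A 0 0 + A 1 1) (ξ 1)) := by
  have off_diagonal :
      sesq (matMul (hermToMat X) A) ξ ξ - sesq (hermToMat X) ξ (matVec A ξ) =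
        oinner (ξ 0) (oassoc X.2.2 (A 1 1) (ξ 1)) +
          oinner (ξ 1) (oassoc (oconj X.2.2) (A 0 0) (ξ 0)) := by
    simp [sesq_matMul_sub_sesq_matVec, hermToMat, Fin.sum_univ_two, oassoc_oR_left,
      oinner_zero_right, oinner_oassoc_self]
  rw [off_diagonal, oinner_oassoc_oconj_swap, ← oinner_add_right, ← oassoc_add_middle,
    add_comm (A 1 1)]

/-- Identity (22) of Proposition 6.13: for X octonionic Hermitian, A traceless and
ξ ∈ 𝕆², Re(ξ*((X·A)ξ)) = Re(ξ*(X·(Aξ))). -/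
theorem reQuad_matMul (X : Herm) (A : Omat) (hA : A 0 0 + A 1 1 = 0)
    (ξ : Fin 2 → Oct) :
    sesq (matMul (hermToMat X) A) ξ ξ = sesq (hermToMat X) ξ (matVec A ξ) := by
  rw [← sub_eq_zero, reQuad_matMul_general, hA, oassoc_zero_middle, oinner_zero_right]
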